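/- Let N ≥ 1 and let S_N be the full permutation group of Fin N. Then the real dimension of S_N su(2^N), the real vector space of 2^N × 2^N complex matrices a that are skew-Hermitian, traceless, and satisfy U_α a U_α⁻¹ = a for all permutations α of Fin N, equals the binomial coefficient C(N+3, 3) − 1 (equivalently C(N+3, N) − 1). -/

import Mathlib

open Matrix

/-- The permutation matrix on the index set `I → Fin 2` associated to a permutation `α` of
`I`, corresponding to the bijection `x ↦ x ∘ α`: its `(x, y)` entry is `1` if `y = x ∘ α`
and `0` otherwise. -/
def qubitPermMatrix {I : Type*} [DecidableEq I] [Fintype I] (α : Equiv.Perm I) :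
    Matrix (I → Fin 2) (I → Fin 2) ℂ :=
  Matrix.of fun x y => if y = x ∘ α then 1 else 0

/-!
Sending a complex matrix to the real matrix of the sums `re + im` of its entries identifies the
skew-Hermitian matrices with all real matrices. The identification respects traces (up to the
factor `i`) and simultaneous permutations of rows and columns. The real matrices invariant under a
group `G` acting on the index set `X` are the real functions on the `G`-orbits in `X × X`, and the
trace is a nonzero functional on them, which costs one dimension. For the permutations of `ι` acting
on `X = ι → κ`, an orbit in `X × X`, which is the set of functions `ι → κ × κ`, is determined by the
multiset of values, so that the orbits are counted by stars and bars.
-/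

section SkewHermitian

variable {X : Type*}

/-- The real-linear parametrization of the skew-Hermitian complex matrices by arbitrary real
matrices, `b ↦ (b - bᵀ) / 2 + i (b + bᵀ) / 2`. It is inverse to taking `re + im` of each entry. -/
noncomputable def skewHermitianOfReal : Matrix X X ℝ →ₗ[ℝ] Matrix X X ℂ where
  toFun b := of fun x y => ⟨(b x y - b y x) / 2, (b x y + b y x) / 2⟩
  map_add' b c := by
    ext x y
    apply Complex.ext <;> simp <;> ring
  map_smul' r b := by
    ext x y
    apply Complex.ext <;> simp <;> ring

theorem re_skewHermitianOfReal (b : Matrix X X ℝ) (x y : X) :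
    (skewHermitianOfReal b x y).re = (b x y - b y x) / 2 := rfl

theorem im_skewHermitianOfReal (b : Matrix X X ℝ) (x y : X) :
    (skewHermitianOfReal b x y).im = (b x y + b y x) / 2 := rfl

theorem skewHermitianOfReal_injective :
    Function.Injective (skewHermitianOfReal : Matrix X X ℝ → Matrix X X ℂ) := by
  intro b c h
  ext x y
  have hre : (b x y - b y x) / 2 = (c x y - c y x) / 2 := congrArg (fun a => (a x y).re) h
  have him : (b x y + b y x) / 2 = (c x y + c y x) / 2 := congrArg (fun a => (a x y).im) h
  linarith

theorem mem_range_skewHermitianOfReal {a : Matrix X X ℂ} :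
    a ∈ LinearMap.range skewHermitianOfReal ↔ aᴴ = -a := by
  constructor
  · rintro ⟨b, rfl⟩
    ext x y
    apply Complex.ext <;>
      simp only [conjTranspose_apply, Matrix.neg_apply, Complex.star_def, Complex.conj_re,
        Complex.conj_im, Complex.neg_re, Complex.neg_im, re_skewHermitianOfReal,
        im_skewHermitianOfReal] <;>
      ring
  · intro ha
    have hre (x y : X) : (a y x).re = -(a x y).re := congrArg (fun c => (c x y).re) ha
    have him (x y : X) : -(a y x).im = -(a x y).im := congrArg (fun c => (c x y).im) ha
    refine ⟨of fun x y => (a x y).re + (a x y).im, ?_⟩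
    ext x y
    apply Complex.ext <;>
      simp only [re_skewHermitianOfReal, im_skewHermitianOfReal, of_apply] <;>
      linarith [hre x y, him x y]

theorem submatrix_skewHermitianOfReal {Y : Type*} (b : Matrix X X ℝ) (f : Y → X) :
    (skewHermitianOfReal b).submatrix f f = skewHermitianOfReal (b.submatrix f f) := rfl

theorem trace_skewHermitianOfReal [Fintype X] (b : Matrix X X ℝ) :
    (skewHermitianOfReal b).trace = b.trace * Complex.I := by
  have hdiag (x : X) : skewHermitianOfReal b x x = b x x * Complex.I := by
    apply Complex.ext <;> simp [re_skewHermitianOfReal, im_skewHermitianOfReal]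
  simp only [trace, diag_apply, hdiag, Complex.ofReal_sum, Finset.sum_mul]

end SkewHermitian

section Orbital

open MulAction

variable (R G : Type*) {X : Type*} [Semiring R] [Group G] [MulAction G X]

/-- The matrix whose entry at `(x, y)` is the value of a given function at the orbit (orbital) of
`(x, y)` under the diagonal action of `G`. -/
def orbitalMatrix : (orbitRel.Quotient G (X × X) → R) →ₗ[R] Matrix X X R where
  toFun c := of fun x y => c (Quotient.mk _ (x, y))
  map_add' _ _ := rfl
  map_smul' _ _ := rfl

theorem orbitalMatrix_apply (c : orbitRel.Quotient G (X × X) → R) (x y : X) :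
    orbitalMatrix R G c x y = c (Quotient.mk _ (x, y)) := rfl

theorem orbitalMatrix_injective :
    Function.Injective (orbitalMatrix R G : _ → Matrix X X R) := by
  intro c d h
  ext q
  induction q using Quotient.inductionOn with
  | h p => exact congrFun (congrFun h p.1) p.2

variable {R G} in
theorem mem_range_orbitalMatrix {b : Matrix X X R} :
    b ∈ LinearMap.range (orbitalMatrix R G) ↔
      ∀ g : G, b.submatrix (g • ·) (g • ·) = b := by
  constructor
  · rintro ⟨c, rfl⟩ g
    ext x y
    exact congrArg c (orbitRel.Quotient.quotient_smul_eq (g := g) (a := (x, y)))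
  · intro hb
    refine ⟨Quotient.lift (fun p => b p.1 p.2) ?_, rfl⟩
    rintro _ p ⟨g, rfl⟩
    exact congrFun (congrFun (hb g) p.1) p.2

theorem finrank_ker_trace_orbitalMatrix (K : Type*) [Field K] [CharZero K] [Fintype X]
    [Nonempty X] :
    Module.finrank K (LinearMap.ker (traceLinearMap X K K ∘ₗ orbitalMatrix K G)) =
      Nat.card (orbitRel.Quotient G (X × X)) - 1 := by
  have : Fintype (orbitRel.Quotient G (X × X)) := Fintype.ofFinite _
  have htrace : traceLinearMap X K K ∘ₗ orbitalMatrix K G ≠ 0 := by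
    intro h
    have hone : (Fintype.card X : K) = 0 := by
      simpa [orbitalMatrix_apply, trace] using LinearMap.congr_fun h 1
    exact Fintype.card_ne_zero (Nat.cast_eq_zero.mp hone)
  have hker := Module.Dual.finrank_ker_add_one_of_ne_zero htrace
  rw [Module.finrank_fintype_fun_eq_card, ← Nat.card_eq_fintype_card] at hker
  exact Nat.eq_sub_of_add_eq hker

end Orbital

theorem finrank_traceless_skewHermitian_invariant (G : Type*) {X : Type*} [Group G] [MulAction G X]
    [Fintype X] [Nonempty X] (V : Submodule ℝ (Matrix X X ℂ))
    (hV : ∀ a, a ∈ V ↔ aᴴ = -a ∧ a.trace = 0 ∧ ∀ g : G, a.submatrix (g • ·) (g • ·) = a) :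
    Module.finrank ℝ V = Nat.card (MulAction.orbitRel.Quotient G (X × X)) - 1 := by
  let toMatrix := skewHermitianOfReal ∘ₗ orbitalMatrix ℝ G (X := X)
  have h_inj : Function.Injective toMatrix :=
    skewHermitianOfReal_injective.comp (orbitalMatrix_injective ℝ G)
  have h_map : V = (LinearMap.ker (traceLinearMap X ℝ ℝ ∘ₗ orbitalMatrix ℝ G)).map toMatrix := by
    ext a
    rw [hV, ← mem_range_skewHermitianOfReal]
    constructor
    · rintro ⟨⟨b, rfl⟩, htrace, hinv⟩
      have hb : b ∈ LinearMap.range (orbitalMatrix ℝ G) :=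
        mem_range_orbitalMatrix.mpr fun g => skewHermitianOfReal_injective <| by
          rw [← submatrix_skewHermitianOfReal, hinv g]
      obtain ⟨c, rfl⟩ := hb
      refine ⟨c, ?_, rfl⟩
      simpa [trace_skewHermitianOfReal] using htrace
    · rintro ⟨c, hc, rfl⟩
      have htrace : (orbitalMatrix ℝ G c).trace = 0 := hc
      refine ⟨⟨_, rfl⟩, ?_, fun g => ?_⟩
      · simp [toMatrix, trace_skewHermitianOfReal, htrace]
      · rw [LinearMap.comp_apply, submatrix_skewHermitianOfReal,
          mem_range_orbitalMatrix.mp ⟨c, rfl⟩ g]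
  rw [h_map, ← (Submodule.equivMapOfInjective toMatrix h_inj _).finrank_eq,
    finrank_ker_trace_orbitalMatrix]

section PermutationOrbits

open Equiv MulAction

variable {ι β κ : Type*} [Fintype ι]

/-- The multiset of values of a function on a finite type, as an unordered tuple. For a pair of
words, read as one word of pairs, this is its joint type. -/
def valueSym (f : ι → β) : Sym β (Fintype.card ι) :=
  ⟨Finset.univ.val.map f, by simp⟩

theorem valueSym_eq_iff {f g : ι → β} : valueSym f = valueSym g ↔ ∃ α : Perm ι, g ∘ α = f := by
  classical
  constructor
  · intro h
    have hcard (b : β) : Fintype.card {i // f i = b} = Fintype.card {i // g i = b} := by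
      have hcount := congrArg (fun s => Multiset.count b s.1) h
      simpa only [valueSym, Multiset.count_map, Fintype.card_subtype, Finset.card_def,
        Finset.filter_val, eq_comm] using hcount
    exact ⟨ofFiberEquiv fun b => Fintype.equivOfCardEq (hcard b), funext (ofFiberEquiv_map _)⟩
  · rintro ⟨α, rfl⟩
    apply Subtype.ext
    simp only [valueSym]
    rw [← Multiset.map_map, Multiset.map_univ_val_equiv]

theorem valueSym_surjective : Function.Surjective (valueSym : (ι → β) → Sym β _) := by
  classical
  rintro ⟨s, hs⟩
  let e : ι ≃ s := Fintype.equivOfCardEq (by rw [Multiset.card_coe, hs])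
  refine ⟨fun i => (e i).fst, Subtype.ext ?_⟩
  change Finset.univ.val.map ((fun x : s => x.fst) ∘ e) = s
  rw [← Multiset.map_map, Multiset.map_univ_val_equiv, Multiset.map_univ_coe]

theorem card_orbits_perm_pairs [Fintype κ] [Fintype β] :
    Nat.card (orbitRel.Quotient (Perm ι)ᵈᵐᵃ ((ι → κ) × (ι → β))) =
      Nat.multichoose (Fintype.card κ * Fintype.card β) (Fintype.card ι) := by
  classical
  let jointType := valueSym ∘ (arrowProdEquivProdArrow ι (fun _ => κ) fun _ => β).symm
  have h_surj : Function.Surjective jointType :=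
    valueSym_surjective.comp (Equiv.surjective _)
  have h_ker : orbitRel (Perm ι)ᵈᵐᵃ ((ι → κ) × (ι → β)) = Setoid.ker jointType := by
    ext p q
    rw [orbitRel_apply, Setoid.ker_def]
    refine Iff.trans ?_ valueSym_eq_iff.symm
    constructor
    · rintro ⟨g, rfl⟩
      exact ⟨DomMulAct.mk.symm g, rfl⟩
    · rintro ⟨α, h⟩
      exact ⟨DomMulAct.mk α, (arrowProdEquivProdArrow ι _ _).symm.injective h⟩
  rw [orbitRel.Quotient, h_ker, Nat.card_congr (Setoid.quotientKerEquivOfSurjective _ h_surj),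
    Nat.card_eq_fintype_card, Sym.card_sym_eq_multichoose, Fintype.card_prod]

end PermutationOrbits

section PermMatrix

theorem permMatrix_conj {R n : Type*} [CommRing R] [Fintype n] [DecidableEq n] (σ : Equiv.Perm n)
    (a : Matrix n n R) : σ.permMatrix R * a * (σ.permMatrix R)⁻¹ = a.submatrix σ σ := by
  have h_inv : (σ.permMatrix R)⁻¹ = σ⁻¹.permMatrix R :=
    inv_eq_right_inv (by rw [← permMatrix_mul, inv_mul_cancel, permMatrix_one])
  rw [h_inv, PEquiv.toMatrix_toPEquiv_mul, PEquiv.mul_toMatrix_toPEquiv]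
  rfl

variable {I : Type*} [Fintype I] [DecidableEq I]

theorem qubitPermMatrix_eq_permMatrix (α : Equiv.Perm I) :
    qubitPermMatrix α = Equiv.Perm.permMatrix ℂ (α.symm.arrowCongr (Equiv.refl (Fin 2))) := by
  ext x y
  simp only [qubitPermMatrix, of_apply, PEquiv.toMatrix_apply, Equiv.toPEquiv_apply,
    Option.mem_some_iff, eq_comm (a := y)]
  rfl

theorem qubitPermMatrix_conj (α : Equiv.Perm I) (a : Matrix (I → Fin 2) (I → Fin 2) ℂ) :
    qubitPermMatrix α * a * (qubitPermMatrix α)⁻¹ = a.submatrix (· ∘ α) (· ∘ α) := by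
  rw [qubitPermMatrix_eq_permMatrix, permMatrix_conj]
  rfl

end PermMatrix

theorem multichoose_four (n : ℕ) : Nat.multichoose 4 n = (n + 3).choose 3 := by
  rw [Nat.multichoose_eq, show 4 + n - 1 = n + 3 by lia, Nat.choose_symm_add]

theorem finrank_SNsu_general {ι κ : Type*} [Fintype ι] [DecidableEq ι] [Fintype κ] [Nonempty κ]
    (V : Submodule ℝ (Matrix (ι → κ) (ι → κ) ℂ))
    (hV : ∀ a, a ∈ V ↔ aᴴ = -a ∧ a.trace = 0 ∧
      ∀ α : Equiv.Perm ι, a.submatrix (· ∘ α) (· ∘ α) = a) :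
    Module.finrank ℝ V =
      Nat.multichoose (Fintype.card κ * Fintype.card κ) (Fintype.card ι) - 1 := by
  have hV_smul (a) : a ∈ V ↔ aᴴ = -a ∧ a.trace = 0 ∧
      ∀ g : (Equiv.Perm ι)ᵈᵐᵃ, a.submatrix (g • ·) (g • ·) = a :=
    (hV a).trans (and_congr_right' (and_congr_right' DomMulAct.mk.forall_congr_left))
  rw [finrank_traceless_skewHermitian_invariant (Equiv.Perm ι)ᵈᵐᵃ V hV_smul,
    card_orbits_perm_pairs]

/-- For `N ≥ 1`, the real dimension of `S_N su(2^N)` (skew-Hermitian,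
traceless matrices invariant under conjugation by `U_α` for every permutation `α` of
`Fin N`) equals `C(N+3, 3) − 1`. -/
theorem finrank_SNsu (N : ℕ) (hN : 1 ≤ N)
    (V : Submodule ℝ (Matrix (Fin N → Fin 2) (Fin N → Fin 2) ℂ))
    (hV : ∀ a, a ∈ V ↔ aᴴ = -a ∧ a.trace = 0 ∧
      ∀ α : Equiv.Perm (Fin N), qubitPermMatrix α * a * (qubitPermMatrix α)⁻¹ = a) :
    Module.finrank ℝ V = Nat.choose (N + 3) 3 - 1 := by
  simpa [multichoose_four] using
    finrank_SNsu_general V (by simpa only [qubitPermMatrix_conj] using hV)
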